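/- Let n ∈ ℕ, let I_n be a finite set of knapsack instances i = (c, a, b) of dimension n with a_1,…,a_n > 0 and b ≥ 0, let p : I_n → [0,1] be a probability mass function, and let V assign a value function to each instance i ∈ I_n. Then Φ_n(V, V*) ≤ Ψ_n(V), i.e., Σ_{i∈I_n} p(i) · |V(n; i, 0) − V*(n; i, 0)| ≤ Σ_{i∈I_n} p(i) · Σ_{k=1}^{n} Σ { δ̄(k; i, ξ) : ξ ∈ B_{n,k} and Σ_{j=k+1}^n a_j ξ_j ≤ b }. -/

import Mathlib

/-!
The optimal value function satisfies the Bellman equation, and the Bellman operator at a state `ξ`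
depends on the level below only through the successors of `ξ`, with Lipschitz constant `1` for the
maximum norm. So the error `|V - V*|` at `ξ` is at most the residual `δ̄` at `ξ` plus the sum of the
errors at its successors. Each feasible state is a successor of at most one state, hence summing
over a whole level bounds the total error there by the total residual plus the total error one level
below. Descending to level `0`, where `V = V* = 0`, leaves only residuals.
-/

/-- `upd n ξ p` is `ξ + e^{p+1}`, i.e. `ξ` with the (0-indexed) position `p` set to `1`. -/
def upd (n : ℕ) (ξ : Fin n → Bool) (p : ℕ) : Fin n → Bool :=
  fun j => if j.val = p then true else ξ j

/-- `headSum n k a x = Σ_{j=1}^{k} a_j x_j` (0-indexed positions `< k`). -/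
def headSum (n k : ℕ) (a : Fin n → ℝ) (x : Fin n → Bool) : ℝ :=
  ∑ j ∈ Finset.univ.filter (fun j : Fin n => j.val < k), if x j then a j else 0

/-- `tailSum n k a ξ = Σ_{j=k+1}^{n} a_j ξ_j` (0-indexed positions `≥ k`). -/
def tailSum (n k : ℕ) (a : Fin n → ℝ) (ξ : Fin n → Bool) : ℝ :=
  ∑ j ∈ Finset.univ.filter (fun j : Fin n => k ≤ j.val), if ξ j then a j else 0

/-- `knapSubVal n c a b k ξ` is `V*(k; i, ξ)` for the knapsack instance `i = (c,a,b)`. -/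
noncomputable def knapSubVal (n : ℕ) (c a : Fin n → ℝ) (b : ℝ) (k : ℕ) (ξ : Fin n → Bool) : ℝ :=
  sSup {v | ∃ x : Fin n → Bool,
    headSum n k a x ≤ b - tailSum n k a ξ ∧ v = headSum n k c x}

section

variable {n k : ℕ} (c : Fin n → ℝ) {a : Fin n → ℝ} {b : ℝ} {ℓ : Fin n} {x ξ : Fin n → Bool}

lemma upd_eq_update (ξ : Fin n → Bool) (ℓ : Fin n) : upd n ξ ℓ = Function.update ξ ℓ true := by
  funext j
  simp only [upd, Function.update_apply, Fin.ext_iff]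

lemma headSum_zero (a : Fin n → ℝ) (x : Fin n → Bool) : headSum n 0 a x = 0 := by
  simp [headSum]

lemma headSum_false (k : ℕ) (a : Fin n → ℝ) : headSum n k a (fun _ => false) = 0 := by
  simp [headSum]

lemma tailSum_false (k : ℕ) (a : Fin n → ℝ) : tailSum n k a (fun _ => false) = 0 := by
  simp [tailSum]

lemma headSum_nonneg (ha : ∀ j, 0 ≤ a j) (k : ℕ) (x : Fin n → Bool) : 0 ≤ headSum n k a x :=
  Finset.sum_nonneg fun j _ => ite_nonneg (ha j) le_rfl

lemma headSum_succ (ℓ : Fin n) (a : Fin n → ℝ) (x : Fin n → Bool) :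
    headSum n (ℓ + 1) a x = headSum n ℓ a x + if x ℓ then a ℓ else 0 := by
  have insert_last : Finset.univ.filter (fun j : Fin n => j.val < ℓ + 1) =
      insert ℓ (Finset.univ.filter fun j : Fin n => j.val < ℓ) := by
    ext j
    simp only [Finset.mem_filter_univ, Finset.mem_insert, Fin.ext_iff]
    omega
  rw [headSum, insert_last, Finset.sum_insert (by simp), add_comm, headSum]

lemma tailSum_eq_add_tailSum_succ (ℓ : Fin n) (a : Fin n → ℝ) (ξ : Fin n → Bool) :
    tailSum n ℓ a ξ = (if ξ ℓ then a ℓ else 0) + tailSum n (ℓ + 1) a ξ := by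
  have insert_first : Finset.univ.filter (fun j : Fin n => ℓ ≤ j.val) =
      insert ℓ (Finset.univ.filter fun j : Fin n => ℓ + 1 ≤ j.val) := by
    ext j
    simp only [Finset.mem_filter_univ, Finset.mem_insert, Fin.ext_iff]
    omega
  rw [tailSum, insert_first, Finset.sum_insert (by simp), tailSum]

lemma headSum_update (ℓ : Fin n) (a : Fin n → ℝ) (x : Fin n → Bool) (t : Bool) :
    headSum n ℓ a (Function.update x ℓ t) = headSum n ℓ a x := by
  refine Finset.sum_congr rfl fun j hj => ?_
  have hjℓ : j ≠ ℓ := Fin.ne_of_lt (Finset.mem_filter.mp hj).2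
  rw [Function.update_of_ne hjℓ]

lemma tailSum_succ_update (ℓ : Fin n) (a : Fin n → ℝ) (ξ : Fin n → Bool) (t : Bool) :
    tailSum n (ℓ + 1) a (Function.update ξ ℓ t) = tailSum n (ℓ + 1) a ξ := by
  refine Finset.sum_congr rfl fun j hj => ?_
  have hjℓ : j ≠ ℓ := Fin.ne_of_gt (Finset.mem_filter.mp hj).2
  rw [Function.update_of_ne hjℓ]

lemma tailSum_update (ℓ : Fin n) (a : Fin n → ℝ) (ξ : Fin n → Bool) (t : Bool) :
    tailSum n ℓ a (Function.update ξ ℓ t) = (if t then a ℓ else 0) + tailSum n (ℓ + 1) a ξ := by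
  rw [tailSum_eq_add_tailSum_succ, Function.update_self, tailSum_succ_update]

lemma tailSum_update_false (ℓ : Fin n) (a : Fin n → ℝ) (ξ : Fin n → Bool) :
    tailSum n ℓ a (Function.update ξ ℓ false) = tailSum n (ℓ + 1) a ξ := by
  rw [tailSum_update, if_neg Bool.false_ne_true, zero_add]

lemma tailSum_update_true (ℓ : Fin n) (a : Fin n → ℝ) (ξ : Fin n → Bool) :
    tailSum n ℓ a (Function.update ξ ℓ true) = a ℓ + tailSum n (ℓ + 1) a ξ := by
  rw [tailSum_update, if_pos rfl]

lemma headSum_succ_add_tailSum_succ (ℓ : Fin n) (a : Fin n → ℝ) (x ξ : Fin n → Bool) :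
    headSum n (ℓ + 1) a x + tailSum n (ℓ + 1) a ξ =
      headSum n ℓ a x + tailSum n ℓ a (Function.update ξ ℓ (x ℓ)) := by
  rw [headSum_succ, tailSum_update, add_assoc]

lemma finite_setOf_headSum (P : (Fin n → Bool) → Prop) :
    {v | ∃ x, P x ∧ v = headSum n k c x}.Finite :=
  (Set.finite_range (headSum n k c)).subset fun _ ⟨x, _, hx⟩ => ⟨x, hx.symm⟩

lemma headSum_le_knapSubVal (hx : headSum n k a x + tailSum n k a ξ ≤ b) :
    headSum n k c x ≤ knapSubVal n c a b k ξ :=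
  le_csSup (finite_setOf_headSum ..).bddAbove ⟨x, le_sub_iff_add_le.mpr hx, rfl⟩

lemma exists_headSum_eq_knapSubVal (hξ : tailSum n k a ξ ≤ b) :
    ∃ x, headSum n k a x + tailSum n k a ξ ≤ b ∧ headSum n k c x = knapSubVal n c a b k ξ := by
  have zero_fits : headSum n k a (fun _ => false) ≤ b - tailSum n k a ξ := by
    rwa [headSum_false, sub_nonneg]
  have attained : knapSubVal n c a b k ξ ∈ _ :=
    Set.Nonempty.csSup_mem ⟨_, _, zero_fits, rfl⟩ (finite_setOf_headSum c _)
  obtain ⟨x, hx, hxv⟩ := attained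
  exact ⟨x, le_sub_iff_add_le.mp hx, hxv.symm⟩

lemma knapSubVal_zero (hξ : tailSum n 0 a ξ ≤ b) : knapSubVal n c a b 0 ξ = 0 := by
  obtain ⟨x, -, hx⟩ := exists_headSum_eq_knapSubVal c hξ
  rw [← hx, headSum_zero]

lemma knapSubVal_update_add_le {t : Bool} (ht : tailSum n ℓ a (Function.update ξ ℓ t) ≤ b) :
    knapSubVal n c a b ℓ (Function.update ξ ℓ t) + (if t then c ℓ else 0) ≤
      knapSubVal n c a b (ℓ + 1) ξ := by
  obtain ⟨x, hx, hxv⟩ := exists_headSum_eq_knapSubVal c ht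
  have extended_fits :
      headSum n (ℓ + 1) a (Function.update x ℓ t) + tailSum n (ℓ + 1) a ξ ≤ b := by
    rwa [headSum_succ_add_tailSum_succ, headSum_update, Function.update_self]
  have extended_le := headSum_le_knapSubVal c extended_fits
  rwa [headSum_succ, headSum_update, Function.update_self, hxv] at extended_le

lemma exists_knapSubVal_succ_le (ha : ∀ j, 0 ≤ a j) (hξ : tailSum n (ℓ + 1) a ξ ≤ b) :
    ∃ t : Bool, tailSum n ℓ a (Function.update ξ ℓ t) ≤ b ∧
      knapSubVal n c a b (ℓ + 1) ξ ≤
        knapSubVal n c a b ℓ (Function.update ξ ℓ t) + if t then c ℓ else 0 := by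
  obtain ⟨x, hx, hxv⟩ := exists_headSum_eq_knapSubVal c hξ
  rw [headSum_succ_add_tailSum_succ] at hx
  refine ⟨x ℓ, (le_add_of_nonneg_left (headSum_nonneg ha ℓ x)).trans hx, ?_⟩
  rw [← hxv, headSum_succ]
  gcongr
  exact headSum_le_knapSubVal c hx

/-- The Bellman operator deciding item `ℓ`: from values `W` of the states of level `ℓ` it computes
values of the states of level `ℓ + 1`. With `W = V(k - 1; i, ·)` and `k = ℓ + 1`, the paper's
`δ(k; i, ξ)` is `bellman c a b ℓ W ξ - V(k; i, ξ)`. -/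
noncomputable def bellman (c a : Fin n → ℝ) (b : ℝ) (ℓ : Fin n) (W : (Fin n → Bool) → ℝ)
    (ξ : Fin n → Bool) : ℝ :=
  if a ℓ + tailSum n (ℓ + 1) a ξ ≤ b then max (W ξ) (c ℓ + W (upd n ξ ℓ)) else W ξ

lemma abs_bellman_sub (W : (Fin n → Bool) → ℝ) (v : ℝ) :
    |bellman c a b ℓ W ξ - v| =
      if a ℓ + tailSum n (ℓ + 1) a ξ ≤ b then |max (W ξ) (c ℓ + W (upd n ξ ℓ)) - v|
      else |W ξ - v| := by
  unfold bellman
  split_ifs <;> rfl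

/-- The feasible states of level `k`: those `ξ ∈ B_{n,k}` whose weight is at most `b`. -/
noncomputable def feasible (a : Fin n → ℝ) (b : ℝ) (k : ℕ) : Finset (Fin n → Bool) :=
  {ξ | (∀ j : Fin n, j.val < k → ξ j = false) ∧ tailSum n k a ξ ≤ b}

lemma mem_feasible :
    ξ ∈ feasible a b k ↔ (∀ j : Fin n, j.val < k → ξ j = false) ∧ tailSum n k a ξ ≤ b :=
  Finset.mem_filter_univ ξ

lemma false_mem_feasible (a : Fin n → ℝ) (hb : 0 ≤ b) (k : ℕ) :
    (fun _ => false) ∈ feasible a b k :=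
  mem_feasible.mpr ⟨fun _ _ => rfl, (tailSum_false k a).trans_le hb⟩

lemma update_false_of_mem_feasible_succ (hξ : ξ ∈ feasible a b (ℓ + 1)) :
    Function.update ξ ℓ false = ξ :=
  Function.update_eq_self_iff.mpr ((mem_feasible.mp hξ).1 ℓ ℓ.val.lt_succ_self).symm

theorem knapSubVal_succ_eq_bellman (ha : ∀ j, 0 ≤ a j) (hξ : ξ ∈ feasible a b (ℓ + 1)) :
    knapSubVal n c a b (ℓ + 1) ξ = bellman c a b ℓ (knapSubVal n c a b ℓ) ξ := by
  have skip : Function.update ξ ℓ false = ξ := update_false_of_mem_feasible_succ hξ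
  have hξb : tailSum n (ℓ + 1) a ξ ≤ b := (mem_feasible.mp hξ).2
  have skip_le : knapSubVal n c a b ℓ ξ ≤ knapSubVal n c a b (ℓ + 1) ξ := by
    simpa [skip] using knapSubVal_update_add_le (t := false) c
      ((tailSum_update_false ℓ a ξ).trans_le hξb)
  obtain ⟨t, ht, le_best⟩ := exists_knapSubVal_succ_le c ha hξb
  rw [bellman, upd_eq_update, ← tailSum_update_true, add_comm (c ℓ)]
  split_ifs with fits
  · refine le_antisymm ?_ (max_le skip_le (knapSubVal_update_add_le c fits))
    cases t with
    | false => exact le_max_of_le_left (by simpa [skip] using le_best)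
    | true => exact le_max_of_le_right le_best
  · cases t with
    | false => exact le_antisymm (by simpa [skip] using le_best) skip_le
    | true => exact absurd ht fits

/-- The feasible states of level `ℓ` reached from the state `ξ` of level `ℓ + 1` by deciding
item `ℓ`. -/
noncomputable def successors (a : Fin n → ℝ) (b : ℝ) (ℓ : Fin n) (ξ : Fin n → Bool) :
    Finset (Fin n → Bool) :=
  {η ∈ feasible a b ℓ | Function.update η ℓ false = ξ}

lemma update_mem_successors (hξ : ξ ∈ feasible a b (ℓ + 1)) {t : Bool}
    (ht : tailSum n ℓ a (Function.update ξ ℓ t) ≤ b) :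
    Function.update ξ ℓ t ∈ successors a b ℓ ξ := by
  refine Finset.mem_filter.mpr ⟨mem_feasible.mpr ⟨fun j hj => ?_, ht⟩, ?_⟩
  · rw [Function.update_of_ne (Fin.ne_of_lt hj)]
    exact (mem_feasible.mp hξ).1 j (Nat.lt_succ_of_lt hj)
  · rw [Function.update_idem, update_false_of_mem_feasible_succ hξ]

lemma sum_successors_le (a : Fin n → ℝ) (b : ℝ) (ℓ : Fin n) {f : (Fin n → Bool) → ℝ}
    (hf : ∀ ξ, 0 ≤ f ξ) :
    ∑ ξ ∈ feasible a b (ℓ + 1), ∑ η ∈ successors a b ℓ ξ, f η ≤ ∑ η ∈ feasible a b ℓ, f η :=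
  Finset.sum_fiberwise_le_sum_of_sum_fiber_nonneg fun _ _ => Finset.sum_nonneg fun η _ => hf η

lemma self_mem_successors (hξ : ξ ∈ feasible a b (ℓ + 1)) : ξ ∈ successors a b ℓ ξ := by
  have skip_fits := (tailSum_update_false ℓ a ξ).trans_le (mem_feasible.mp hξ).2
  simpa only [update_false_of_mem_feasible_succ hξ] using update_mem_successors hξ skip_fits

lemma upd_mem_successors (hξ : ξ ∈ feasible a b (ℓ + 1))
    (fits : a ℓ + tailSum n (ℓ + 1) a ξ ≤ b) : upd n ξ ℓ ∈ successors a b ℓ ξ := by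
  rw [upd_eq_update]
  exact update_mem_successors hξ ((tailSum_update_true ℓ a ξ).trans_le fits)

lemma abs_bellman_sub_bellman_le (W W' : (Fin n → Bool) → ℝ)
    (hξ : ξ ∈ feasible a b (ℓ + 1)) :
    |bellman c a b ℓ W ξ - bellman c a b ℓ W' ξ| ≤ ∑ η ∈ successors a b ℓ ξ, |W η - W' η| := by
  have le_sum : ∀ η ∈ successors a b ℓ ξ, |W η - W' η| ≤ ∑ η ∈ successors a b ℓ ξ, |W η - W' η| :=
    fun _ => Finset.single_le_sum (f := fun η => |W η - W' η|) fun _ _ => abs_nonneg _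
  unfold bellman
  split_ifs with fits
  · refine (abs_max_sub_max_le_max _ _ _ _).trans
      (max_le (le_sum ξ (self_mem_successors hξ)) ?_)
    rw [add_sub_add_left_eq_sub]
    exact le_sum _ (upd_mem_successors hξ fits)
  · exact le_sum ξ (self_mem_successors hξ)

lemma abs_sub_knapSubVal_succ_le (ha : ∀ j, 0 ≤ a j)
    (V : ℕ → (Fin n → Bool) → ℝ) (hξ : ξ ∈ feasible a b (ℓ + 1)) :
    |V (ℓ + 1) ξ - knapSubVal n c a b (ℓ + 1) ξ| ≤
      |bellman c a b ℓ (V ℓ) ξ - V (ℓ + 1) ξ| +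
        ∑ η ∈ successors a b ℓ ξ, |V ℓ η - knapSubVal n c a b ℓ η| := by
  rw [knapSubVal_succ_eq_bellman c ha hξ, abs_sub_comm (bellman c a b ℓ (V ℓ) ξ)]
  exact (abs_sub_le _ (bellman c a b ℓ (V ℓ) ξ) _).trans
    (add_le_add_right (abs_bellman_sub_bellman_le c _ _ hξ) _)

lemma sum_abs_sub_knapSubVal_succ_le (ha : ∀ j, 0 ≤ a j) (b : ℝ)
    (V : ℕ → (Fin n → Bool) → ℝ) (ℓ : Fin n) :
    ∑ ξ ∈ feasible a b (ℓ + 1), |V (ℓ + 1) ξ - knapSubVal n c a b (ℓ + 1) ξ| ≤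
      ∑ ξ ∈ feasible a b ℓ, |V ℓ ξ - knapSubVal n c a b ℓ ξ| +
        ∑ ξ ∈ feasible a b (ℓ + 1), |bellman c a b ℓ (V ℓ) ξ - V (ℓ + 1) ξ| := by
  refine (Finset.sum_le_sum fun ξ hξ => abs_sub_knapSubVal_succ_le c ha V hξ).trans ?_
  rw [Finset.sum_add_distrib, add_comm]
  gcongr
  exact sum_successors_le a b ℓ fun _ => abs_nonneg _

theorem sum_abs_sub_knapSubVal_le (ha : ∀ j, 0 ≤ a j)
    {V : ℕ → (Fin n → Bool) → ℝ} (hV0 : ∀ ξ ∈ feasible a b 0, V 0 ξ = 0) (hk : k ≤ n) :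
    ∑ ξ ∈ feasible a b k, |V k ξ - knapSubVal n c a b k ξ| ≤
      ∑ ℓ : Fin k, ∑ ξ ∈ feasible a b (ℓ + 1),
        |bellman c a b (ℓ.castLE hk) (V ℓ) ξ - V (ℓ + 1) ξ| := by
  induction k with
  | zero =>
    refine (Finset.sum_eq_zero fun ξ hξ => ?_).trans_le (Finset.sum_nonneg fun ℓ _ => ℓ.elim0)
    rw [hV0 ξ hξ, knapSubVal_zero c (mem_feasible.mp hξ).2, sub_zero, abs_zero]
  | succ k ih =>
    rw [Fin.sum_univ_castSucc]
    exact (sum_abs_sub_knapSubVal_succ_le c ha b V ⟨k, hk⟩).trans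
      (add_le_add_left (ih (Nat.le_of_succ_le hk)) _)

end

theorem knap_Phi_le_Psi_general {n k : ℕ} {c a : Fin n → ℝ} {b : ℝ} (ha : ∀ j, 0 ≤ a j)
    {V : ℕ → (Fin n → Bool) → ℝ} (hV0 : ∀ ξ ∈ feasible a b 0, V 0 ξ = 0) (hk : k ≤ n)
    {ξ : Fin n → Bool} (hξ : ξ ∈ feasible a b k) :
    |V k ξ - knapSubVal n c a b k ξ| ≤
      ∑ ℓ : Fin k, ∑ η ∈ feasible a b (ℓ + 1),
        |bellman c a b (ℓ.castLE hk) (V ℓ) η - V (ℓ + 1) η| :=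
  (Finset.single_le_sum (f := fun η => |V k η - knapSubVal n c a b k η|)
    (fun _ _ => abs_nonneg _) hξ).trans (sum_abs_sub_knapSubVal_le c ha hV0 hk)

/-- `Φ_n(V, V*) ≤ Ψ_n(V)`: for a finite set `I` of knapsack instances
`i = (c, a, b)` of dimension `n` (with `a_j > 0`, `b ≥ 0`), a probability mass function
`p` on `I`, and a value function `V i` for each `i ∈ I`,
`Σ_i p(i)·|V(n; i, 0) − V*(n; i, 0)| ≤
 Σ_i p(i)·Σ_{k=1}^{n} Σ { δ̄(k; i, ξ) : ξ ∈ B_{n,k}, Σ_{j>k} a_j ξ_j ≤ b }`.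
The summation index `ℓ : Fin n` represents the level `k = ℓ.val + 1 ∈ {1,…,n}`. -/
theorem knap_Phi_le_Psi (n : ℕ) (I : Finset ((Fin n → ℝ) × (Fin n → ℝ) × ℝ))
    (hI : ∀ i ∈ I, (∀ j, 0 < i.2.1 j) ∧ 0 ≤ i.2.2)
    (p : (Fin n → ℝ) × (Fin n → ℝ) × ℝ → ℝ)
    (hp0 : ∀ i ∈ I, 0 ≤ p i) (hp1 : ∑ i ∈ I, p i = 1)
    (V : (Fin n → ℝ) × (Fin n → ℝ) × ℝ → ℕ → (Fin n → Bool) → ℝ)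
    (hV0 : ∀ i ∈ I, ∀ ξ, V i 0 ξ = 0) :
    ∑ i ∈ I, p i *
        |V i n (fun _ => false) - knapSubVal n i.1 i.2.1 i.2.2 n (fun _ => false)| ≤
      ∑ i ∈ I, p i *
        ∑ ℓ : Fin n,
          ∑ ξ ∈ Finset.univ.filter (fun ξ : Fin n → Bool =>
              (∀ j : Fin n, j.val ≤ ℓ.val → ξ j = false) ∧
              tailSum n (ℓ.val + 1) i.2.1 ξ ≤ i.2.2),
            (if i.2.1 ℓ + tailSum n (ℓ.val + 1) i.2.1 ξ ≤ i.2.2 then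
              |max (V i ℓ.val ξ) (i.1 ℓ + V i ℓ.val (upd n ξ ℓ.val)) - V i (ℓ.val + 1) ξ|
            else
              |V i ℓ.val ξ - V i (ℓ.val + 1) ξ|) := by
  refine Finset.sum_le_sum fun i hi => mul_le_mul_of_nonneg_left ?_ (hp0 i hi)
  obtain ⟨ha, hb⟩ := hI i hi
  simpa only [abs_bellman_sub, feasible, Order.lt_add_one_iff, Fin.castLE_rfl, id] using
    knap_Phi_le_Psi_general (c := i.1) (fun j => (ha j).le) (fun ξ _ => hV0 i hi ξ) le_rfl
      (false_mem_feasible i.2.1 hb n)
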